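/- For every countable ordinal β there exists a separable LMP 𝕊 (with countable label set) such that Z(𝕊) ≥ β; that is, the supremum of the Zhou ordinals of separable LMPs is at least ω₁. -/

import Mathlib

open MeasureTheory

/-- A labelled Markov process over the measurable space `S` with label set `L`:
each `τ a` is a Markov kernel, i.e. `τ a s` is a subprobability measure for each state `s`,
and `s ↦ τ a s E` is measurable for each measurable `E`. -/
structure LMP (S : Type*) (L : Type*) [MeasurableSpace S] where
  τ : L → S → Measure S
  prob_le_one : ∀ (a : L) (s : S), τ a s Set.univ ≤ 1
  measurable_eval : ∀ (a : L) (E : Set S), MeasurableSet E → Measurable fun s => τ a s E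

namespace LMP

variable {S L : Type*} [MeasurableSpace S]

/-- `A` is `R`-closed: anything related to a point of `A` lies in `A`. -/
def RClosed (R : Set (S × S)) (A : Set S) : Prop :=
  ∀ ⦃x⦄, x ∈ A → ∀ ⦃s⦄, (x, s) ∈ R → s ∈ A

/-- `Σ(R)`: the family of measurable `R`-closed sets. -/
def sigmaCl (R : Set (S × S)) : Set (Set S) :=
  {A | MeasurableSet A ∧ RClosed R A}

/-- `R(Λ)`: the relation identifying states belonging to exactly the same members of `Λ`. -/
def rel (Λ : Set (Set S)) : Set (S × S) :=
  {p | ∀ A ∈ Λ, p.1 ∈ A ↔ p.2 ∈ A}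

/-- `R^T(Λ)`: states assigning the same probabilities to every member of `Λ`, for all labels. -/
def relT (M : LMP S L) (Λ : Set (Set S)) : Set (S × S) :=
  {p | ∀ (a : L), ∀ E ∈ Λ, M.τ a p.1 E = M.τ a p.2 E}

/-- The operator `𝒪`. -/
def Oop (M : LMP S L) (R : Set (S × S)) : Set (S × S) :=
  M.relT (sigmaCl R)

/-- The operator `𝒢`. -/
def Gop (M : LMP S L) (Λ : Set (Set S)) : Set (Set S) :=
  sigmaCl (M.relT Λ)

/-- The members of the σ-algebra generated by a family of sets. -/
def sigmaGen (U : Set (Set S)) : Set (Set S) :=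
  {A | MeasurableSet[MeasurableSpace.generateFrom U] A}

/-- Transfinite iterates of `𝒪`. -/
noncomputable def Oiter (M : LMP S L) (R : Set (S × S)) (α : Ordinal) : Set (S × S) :=
  Ordinal.limitRecOn α R (fun _ prev => M.Oop prev)
    (fun o _ ih => ⋂ (o' : Ordinal) (h : o' < o), ih o' h)

/-- Transfinite iterates of `𝒢`. -/
noncomputable def Giter (M : LMP S L) (Λ : Set (Set S)) (α : Ordinal) : Set (Set S) :=
  Ordinal.limitRecOn α Λ (fun _ prev => M.Gop prev)
    (fun o _ ih => sigmaGen (⋃ (o' : Ordinal) (h : o' < o), ih o' h))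

/-- `Λ` is a sub-σ-algebra of the ambient σ-algebra. -/
structure IsSubSigmaAlgebra (Λ : Set (Set S)) : Prop where
  subset_meas : ∀ A ∈ Λ, MeasurableSet A
  empty_mem : (∅ : Set S) ∈ Λ
  compl_mem : ∀ A ∈ Λ, Aᶜ ∈ Λ
  iUnion_mem : ∀ f : ℕ → Set S, (∀ n, f n ∈ Λ) → (⋃ n, f n) ∈ Λ

/-- A family `Λ` is stable w.r.t. the process. -/
def Stable (M : LMP S L) (Λ : Set (Set S)) : Prop :=
  ∀ A ∈ Λ, ∀ q : ℚ, 0 ≤ q → q ≤ 1 → ∀ a : L,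
    {s : S | ENNReal.ofReal (q : ℝ) < M.τ a s A} ∈ Λ

/-- A state bisimulation: a symmetric relation such that related states agree on
all measurable `R`-closed sets. -/
def IsStateBisim (M : LMP S L) (R : Set (S × S)) : Prop :=
  (∀ p ∈ R, (p.2, p.1) ∈ R) ∧
    ∀ p ∈ R, ∀ (a : L), ∀ C ∈ sigmaCl R, M.τ a p.1 C = M.τ a p.2 C

/-- State bisimilarity. -/
def stateBisim (M : LMP S L) : Set (S × S) :=
  {p | ∃ R, M.IsStateBisim R ∧ p ∈ R}

/-- Event bisimilarity: related by `R(Λ)` for some stable sub-σ-algebra `Λ`. -/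
def eventBisim (M : LMP S L) : Set (S × S) :=
  {p | ∃ Λ : Set (Set S), IsSubSigmaAlgebra Λ ∧ M.Stable Λ ∧ p ∈ rel Λ}

/-- Formulas of the modal logic `𝓛`. -/
inductive LForm (L : Type*) : Type _
  | top : LForm L
  | and : LForm L → LForm L → LForm L
  | dia : L → {q : ℚ // 0 ≤ q ∧ q < 1} → LForm L → LForm L

/-- Semantics of the logic `𝓛`. -/
def sem (M : LMP S L) : LForm L → Set S
  | LForm.top => Set.univ
  | LForm.and φ ψ => M.sem φ ∩ M.sem ψ
  | LForm.dia a q φ => {s | ENNReal.ofReal ((q : ℚ) : ℝ) < M.τ a s (M.sem φ)}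

/-- `σ(⟦𝓛⟧)`: the σ-algebra generated by the sets definable in the logic. -/
def sigmaLogic (M : LMP S L) : Set (Set S) :=
  sigmaGen (Set.range M.sem)

end LMP

/-- A measurable space is separable if its σ-algebra is countably generated and
separates points. -/
def SeparableMeasurableSpace (S : Type*) [m : MeasurableSpace S] : Prop :=
  (∃ U : Set (Set S), U.Countable ∧ MeasurableSpace.generateFrom U = m) ∧
    ∀ s t : S, s ≠ t → ∃ A : Set S, MeasurableSet A ∧ s ∈ A ∧ t ∉ A

namespace LMP

/-- `ζ` is the Zhou ordinal of `M`: the least ordinal `α` such that `𝒪^α(∼e) = ∼s`. -/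
def IsZhou {S L : Type*} [MeasurableSpace S] (M : LMP S L) (ζ : Ordinal) : Prop :=
  M.Oiter M.eventBisim ζ = M.stateBisim ∧
    ∀ β < ζ, M.Oiter M.eventBisim β ≠ M.stateBisim

end LMP

/-- A labelled Markov process bundled together with its state space and a countable
label set. -/
structure PackedLMP : Type 1 where
  S : Type
  mS : MeasurableSpace S
  L : Type
  cL : Countable L
  M : @LMP S L mS

namespace PackedLMP

/-- The bundled LMP is separable. -/
def Separable (P : PackedLMP) : Prop :=
  letI := P.mS; SeparableMeasurableSpace P.S

/-- `ζ` is the Zhou ordinal of the bundled LMP. -/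
def IsZhou (P : PackedLMP) (ζ : Ordinal.{0}) : Prop :=
  letI := P.mS; LMP.IsZhou P.M ζ

end PackedLMP

/-- The set of Zhou ordinals of separable LMPs. -/
def zhouOrdinals : Set Ordinal.{0} :=
  {ζ | ∃ P : PackedLMP, P.Separable ∧ P.IsZhou ζ}

namespace LMP

section General
variable {S L : Type} [MeasurableSpace S] (M : LMP S L)

theorem Oiter_zero' (R : Set (S × S)) : M.Oiter R (0 : Ordinal.{0}) = R := by
  unfold Oiter; exact Ordinal.limitRecOn_zero ..

theorem Oiter_add_one' (R : Set (S × S)) (α : Ordinal.{0}) :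
    M.Oiter R (α + 1) = M.Oop (M.Oiter R α) := by
  unfold Oiter; exact Ordinal.limitRecOn_add_one ..

theorem Oiter_limit' (R : Set (S × S)) (α : Ordinal.{0}) (h : Order.IsSuccLimit α) :
    M.Oiter R α = ⋂ (o' : Ordinal.{0}) (_ : o' < α), M.Oiter R o' := by
  unfold Oiter; exact Ordinal.limitRecOn_limit _ _ _ _ h

theorem sigmaCl_anti {R R' : Set (S × S)} (h : R ⊆ R') : sigmaCl R' ⊆ sigmaCl R :=
  fun _ hA => ⟨hA.1, fun _ hx _ hs => hA.2 hx (h hs)⟩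

theorem Oop_mono {R R' : Set (S × S)} (h : R ⊆ R') : M.Oop R ⊆ M.Oop R' :=
  fun _ hp a E hE => hp a E (sigmaCl_anti h hE)

theorem Oop_eventBisim : M.Oop M.eventBisim ⊆ M.eventBisim := by
  rintro ⟨s, t⟩ hst
  let Λ : Set (Set S) := {A | ∀ Λ' : Set (Set S), IsSubSigmaAlgebra Λ' → M.Stable Λ' → A ∈ Λ'}
  have hcl : ∀ A ∈ Λ, A ∈ sigmaCl M.eventBisim := by
    intro A hA
    refine ⟨?_, ?_⟩
    · refine hA {A | MeasurableSet A} ⟨fun _ h => h, MeasurableSet.empty, fun _ h => h.compl,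
        fun _ h => MeasurableSet.iUnion h⟩ ?_
      intro A hA q _ _ a
      exact measurableSet_lt measurable_const (M.measurable_eval a A hA)
    · rintro x hx y ⟨Λ', h1, h2, h3⟩
      exact (h3 A (hA Λ' h1 h2)).1 hx
  refine ⟨{A | A ∈ Λ ∧ (s ∈ A ↔ t ∈ A)}, ⟨?_, ?_, ?_, ?_⟩, ?_, ?_⟩
  · intro A hA; exact (hcl A hA.1).1
  · exact ⟨fun Λ' h _ => h.empty_mem, by simp⟩
  · rintro A ⟨h1, h2⟩
    exact ⟨fun Λ' h h' => h.compl_mem _ (h1 Λ' h h'), by simp [h2]⟩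
  · intro f hf
    exact ⟨fun Λ' h h' => h.iUnion_mem _ (fun n => (hf n).1 Λ' h h'), by
      simp only [Set.mem_iUnion]; exact exists_congr fun n => (hf n).2⟩
  · rintro A ⟨h1, h2⟩ q h0 hq a
    refine ⟨fun Λ' h h' => h' A (h1 Λ' h h') q h0 hq a, ?_⟩
    have := hst a A (hcl A h1)
    simp only [Set.mem_ofPred_eq] at this ⊢
    rw [this]
  · intro A hA; exact hA.2

theorem Oiter_succ_le (α : Ordinal.{0}) :
    M.Oiter M.eventBisim (α + 1) ⊆ M.Oiter M.eventBisim α := by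
  induction α using Ordinal.limitRecOn with
  | zero => rw [Oiter_add_one', Oiter_zero']; exact M.Oop_eventBisim
  | add_one o ih =>
    rw [Oiter_add_one', Oiter_add_one']
    rw [Oiter_add_one'] at ih
    exact M.Oop_mono ih
  | limit o h ih =>
    rw [Oiter_limit' _ _ o h]
    refine Set.subset_iInter₂ fun o' ho' => ?_
    rw [Oiter_add_one']
    refine (M.Oop_mono (?_ : _ ⊆ M.Oiter M.eventBisim o')).trans ?_
    · rw [Oiter_limit' _ _ o h]; exact Set.iInter₂_subset o' ho'
    · rw [← Oiter_add_one']; exact ih o' ho'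

theorem Oiter_anti {α γ : Ordinal.{0}} (h : α ≤ γ) :
    M.Oiter M.eventBisim γ ⊆ M.Oiter M.eventBisim α := by
  induction γ using Ordinal.limitRecOn with
  | zero => rw [nonpos_iff_eq_zero.1 h]
  | add_one o ih =>
    rcases h.lt_or_eq with h | h
    · exact (M.Oiter_succ_le o).trans (ih (Order.lt_succ_iff.1 h))
    · rw [h]
  | limit o ho ih =>
    rcases h.lt_or_eq with h | h
    · rw [Oiter_limit' _ _ o ho]; exact Set.iInter₂_subset α h
    · rw [h]

theorem stateBisim_isStateBisim : M.IsStateBisim M.stateBisim := by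
  constructor
  · rintro ⟨s, t⟩ ⟨R, hR, h⟩; exact ⟨R, hR, hR.1 _ h⟩
  · rintro ⟨s, t⟩ ⟨R, hR, h⟩ a C hC
    exact hR.2 _ h a C (sigmaCl_anti (R' := M.stateBisim) (fun p hp => ⟨R, hR, hp⟩) hC)

theorem stateBisim_sub_event : M.stateBisim ⊆ M.eventBisim := by
  have hR := M.stateBisim_isStateBisim
  have hsym : ∀ A : Set S, RClosed M.stateBisim A → ∀ p ∈ M.stateBisim, p.1 ∈ A ↔ p.2 ∈ A :=
    fun A hA p hp => ⟨fun h => hA h hp, fun h => hA h (hR.1 _ hp)⟩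
  intro p hp
  refine ⟨sigmaCl M.stateBisim, ⟨fun A h => h.1, ?_, ?_, ?_⟩, ?_, fun A hA => hsym A hA.2 p hp⟩
  · exact ⟨MeasurableSet.empty, fun x hx => hx.elim⟩
  · rintro A ⟨h1, h2⟩
    exact ⟨h1.compl, fun x hx s hs h => hx ((hsym A h2 _ hs).2 h)⟩
  · intro f hf
    refine ⟨MeasurableSet.iUnion fun n => (hf n).1, fun x hx s hs => ?_⟩
    obtain ⟨n, hn⟩ := Set.mem_iUnion.1 hx
    exact Set.mem_iUnion.2 ⟨n, (hf n).2 hn hs⟩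
  · intro A hA q _ _ a
    refine ⟨measurableSet_lt measurable_const (M.measurable_eval a A hA.1), ?_⟩
    intro x hx s hs
    have := hR.2 _ hs a A hA
    simp only [Set.mem_ofPred_eq] at *
    rwa [← this]

theorem stateBisim_sub_Oiter (α : Ordinal.{0}) : M.stateBisim ⊆ M.Oiter M.eventBisim α := by
  induction α using Ordinal.limitRecOn with
  | zero => rw [Oiter_zero']; exact M.stateBisim_sub_event
  | add_one o ih =>
    rw [Oiter_add_one']
    refine subset_trans ?_ (M.Oop_mono ih)
    exact fun p hp a E hE => M.stateBisim_isStateBisim.2 p hp a E hE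
  | limit o ho ih =>
    rw [Oiter_limit' _ _ o ho]; exact Set.subset_iInter₂ ih

theorem fix_eq (α : Ordinal.{0})
    (h : M.Oiter M.eventBisim α ⊆ M.Oiter M.eventBisim (α + 1)) :
    M.Oiter M.eventBisim α = M.stateBisim := by
  refine subset_antisymm ?_ (M.stateBisim_sub_Oiter α)
  have e : M.Oiter M.eventBisim α = M.Oop (M.Oiter M.eventBisim α) := by
    rw [← Oiter_add_one']; exact subset_antisymm h (M.Oiter_succ_le α)
  intro p hp
  refine ⟨M.Oiter M.eventBisim α, ⟨?_, ?_⟩, hp⟩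
  · intro p hp
    rw [e] at hp ⊢
    exact fun a E hE => (hp a E hE).symm
  · intro p hp a C hC
    rw [e] at hp
    exact hp a C hC

theorem card_le_of_ne (ζ : Ordinal.{0})
    (h : ∀ β < ζ, M.Oiter M.eventBisim β ≠ M.stateBisim) :
    ζ.card ≤ Cardinal.mk (S × S) := by
  have : ∀ β : Set.Iio ζ, ∃ p, p ∈ M.Oiter M.eventBisim β.1 ∧
      p ∉ M.Oiter M.eventBisim (β.1 + 1) := by
    intro β
    by_contra hc
    push Not at hc
    exact h β.1 β.2 (M.fix_eq _ hc)
  choose f hf hf' using this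
  have hinj : Function.Injective f := by
    intro a b hab
    by_contra hne
    have key : ∀ a b : Set.Iio ζ, a < b → f a ≠ f b := by
      intro a b hlt he
      refine hf' a (M.Oiter_anti (Order.add_one_le_of_lt hlt) ?_)
      rw [he]; exact hf b
    rcases lt_or_gt_of_ne hne with h | h
    · exact key _ _ h hab
    · exact key _ _ h hab.symm
  have := Cardinal.mk_le_of_injective (hinj.comp (Ordinal.ToType.mk (o := ζ)).symm.injective)
  rwa [Cardinal.mk_toType] at this

theorem exists_isZhou : ∃ ζ : Ordinal.{0}, M.IsZhou ζ := by
  by_cases h : ∃ ζ : Ordinal.{0}, M.Oiter M.eventBisim ζ = M.stateBisim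
  · classical
    have hw := (wellFounded_lt (α := Ordinal.{0}))
    refine ⟨hw.min {ζ | M.Oiter M.eventBisim ζ = M.stateBisim} h,
      hw.min_mem {ζ | M.Oiter M.eventBisim ζ = M.stateBisim} h, fun β hβ hβ' => ?_⟩
    exact hw.not_lt_min {ζ | M.Oiter M.eventBisim ζ = M.stateBisim} hβ' hβ
  · push Not at h
    have := M.card_le_of_ne (Order.succ (Cardinal.mk (S × S))).ord fun β _ => h β
    rw [Cardinal.card_ord] at this
    exact absurd this (not_le.2 (Order.lt_succ _))

end General
end LMP

theorem zhouOrdinals_bdd : BddAbove zhouOrdinals := by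
  refine ⟨(Order.succ Cardinal.continuum.{0}).ord, ?_⟩
  rintro ζ ⟨P, hsep, hz⟩
  obtain ⟨S, mS, L, cL, M⟩ := P
  change SeparableMeasurableSpace S at hsep
  change M.IsZhou ζ at hz
  have h1 := M.card_le_of_ne ζ hz.2
  obtain ⟨⟨U, hU, hgen⟩, hs⟩ := hsep
  have : MeasurableSpace.CountablyGenerated S := ⟨⟨U, hU, hgen.symm⟩⟩
  have : MeasurableSpace.SeparatesPoints S := ⟨fun x y h => by
    by_contra hne
    obtain ⟨A, hA, hx, hy⟩ := hs x y hne
    exact hy (h A hA hx)⟩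
  obtain ⟨f, -, hf⟩ := MeasurableSpace.measurable_injection_nat_bool_of_countablySeparated S
  have h2 : Cardinal.mk S ≤ Cardinal.continuum := by
    refine (Cardinal.mk_le_of_injective hf).trans ?_
    simp
  have h3 : Cardinal.mk (S × S) ≤ Cardinal.continuum := by
    rw [Cardinal.mk_prod]; simp only [Cardinal.lift_id]
    exact (mul_le_mul' h2 h2).trans (by simp)
  exact (Cardinal.lt_ord.2 (Order.lt_succ_iff.2 (h1.trans h3))).le

open MeasureTheory in
theorem exists_gadget : ∃ (mX : MeasurableSpace (ℕ → ZMod 2))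
    (p : ZMod 2 → @Measure (ℕ → ZMod 2) mX) (V : Set (ℕ → ZMod 2)),
    MeasurableSpace.pi ≤ mX ∧ @MeasurableSpace.CountablyGenerated _ mX ∧
    (∀ b, p b Set.univ ≤ 1) ∧
    (∀ (n : ℕ) (A : Set (ℕ → ZMod 2)), MeasurableSet[mX] A →
      (∀ x, Pi.single n 1 + x ∈ A ↔ x ∈ A) → p 0 A = p 1 A) ∧
    (∀ A : Set (ℕ → ZMod 2), MeasurableSet[MeasurableSpace.pi] A → p 0 A = p 1 A) ∧
    MeasurableSet[mX] V ∧ p 0 V ≠ p 1 V := by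
  classical
  have hli : LinearIndependent (ZMod 2) (fun n : ℕ => (Pi.single n 1 : ℕ → ZMod 2)) :=
    Pi.linearIndependent_single_one ℕ (ZMod 2)
  obtain ⟨φ, hφ⟩ : ∃ φ : (ℕ → ZMod 2) →ₗ[ZMod 2] ZMod 2, ∀ n, φ (Pi.single n 1) = 1 := by
    let B := Module.Basis.extend hli.linearIndepOn_id
    refine ⟨B.constr (ZMod 2) (fun _ => (1 : ZMod 2)), fun n => ?_⟩
    have hn : (Pi.single n 1 : ℕ → ZMod 2) ∈
        hli.linearIndepOn_id.extend (Set.subset_univ _) :=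
      hli.linearIndepOn_id.subset_extend _ ⟨n, rfl⟩
    have : B ⟨_, hn⟩ = Pi.single n 1 := Module.Basis.extend_apply_self _ _
    rw [← this, Module.Basis.constr_basis]
  let m : Measure (ℕ → ZMod 2) := Measure.addHaarMeasure ⊤
  have hm : m Set.univ = 1 := Measure.addHaarMeasure_self (K₀ := ⊤)
  have hinv : ∀ (g : ℕ → ZMod 2) A, m ((fun h => g + h) ⁻¹' A) = m A :=
    fun g A => measure_preimage_add m g A
  let V : ZMod 2 → Set (ℕ → ZMod 2) := fun b => {x | φ x = b}
  let mX : Unit → MeasurableSpace (ℕ → ZMod 2) := fun _ => MeasurableSpace.pi ⊔ MeasurableSpace.generateFrom {V 1}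
  let o : ZMod 2 → OuterMeasure (ℕ → ZMod 2) := fun b => OuterMeasure.restrict (V b) m.toOuterMeasure
  have ho : ∀ b A, o b A = m (A ∩ V b) := fun b A => by simp [o]
  have h01 : ∀ b : ZMod 2, b = 0 ∨ b = 1 := by decide
  have hcar : ∀ b, mX () ≤ (o b).caratheodory := by
    intro b
    refine sup_le ?_ (MeasurableSpace.generateFrom_le ?_)
    · intro A hA
      rw [OuterMeasure.isCaratheodory_iff]
      intro T
      rw [ho, ho, ho, Set.inter_right_comm, show (T \ A) ∩ V b = (T ∩ V b) \ A by ext x; simp only [Set.mem_inter_iff, Set.mem_sdiff]; tauto]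
      exact (measure_inter_add_sdiff _ hA).symm
    · rintro A rfl
      rw [OuterMeasure.isCaratheodory_iff]
      intro T
      rw [ho, ho, ho]
      rcases h01 b with rfl | rfl
      · have e1 : T ∩ V 1 ∩ V 0 = ∅ := by
          ext x; simp only [V, Set.mem_inter_iff, Set.mem_ofPred_eq, Set.mem_empty_iff_false,
            iff_false]; rintro ⟨⟨-, h⟩, h'⟩; rw [h] at h'; exact one_ne_zero h'
        have e2 : (T \ V 1) ∩ V 0 = T ∩ V 0 := by
          ext x; simp only [V, Set.mem_inter_iff, Set.mem_sdiff, Set.mem_ofPred_eq]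
          constructor
          · rintro ⟨⟨h, -⟩, h'⟩; exact ⟨h, h'⟩
          · rintro ⟨h, h'⟩; exact ⟨⟨h, by rw [h']; exact zero_ne_one⟩, h'⟩
        rw [e1, e2]; simp
      · have e1 : T ∩ V 1 ∩ V 1 = T ∩ V 1 := by rw [Set.inter_assoc, Set.inter_self]
        have e2 : (T \ V 1) ∩ V 1 = ∅ := by simp
        rw [e1, e2]; simp
  have hflip : ∀ n A, (∀ x, Pi.single n 1 + x ∈ A ↔ x ∈ A) → m (A ∩ V 0) = m (A ∩ V 1) := by
    intro n A hA
    rw [← hinv (Pi.single n 1) (A ∩ V 1)]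
    congr 1
    ext x
    simp only [V, Set.mem_inter_iff, Set.mem_preimage, hA, Set.mem_ofPred_eq, map_add, hφ]
    rcases h01 (φ x) with h | h <;> simp [h]
  have hBm : (MeasurableSpace.pi : MeasurableSpace (ℕ → ZMod 2)) ≤ mX () := le_sup_left
  have hVm : MeasurableSet[mX ()] (V 1) :=
    le_sup_right (α := MeasurableSpace (ℕ → ZMod 2)) (a := MeasurableSpace.pi) _
      (MeasurableSpace.measurableSet_generateFrom rfl)
  let p : ZMod 2 → @Measure (ℕ → ZMod 2) (mX ()) := fun b => @OuterMeasure.toMeasure _ (mX ()) (o b) (hcar b)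
  have hp : ∀ b A, MeasurableSet[mX ()] A → p b A = m (A ∩ V b) := fun b A hA => by
    rw [← ho]; exact @toMeasure_apply _ (mX ()) (o b) (hcar b) A hA
  refine ⟨mX (), p, V 1, hBm, ?_, ?_, ?_, ?_, hVm, ?_⟩
  · exact MeasurableSpace.CountablyGenerated.sup inferInstance
      (@MeasurableSpace.CountablyGenerated.mk _ (MeasurableSpace.generateFrom {V 1})
        ⟨{V 1}, Set.countable_singleton _, rfl⟩)
  · intro b
    rw [hp b _ MeasurableSet.univ, ← hm]
    exact measure_mono (Set.subset_univ _)
  · intro n A hA hAn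
    rw [hp _ _ hA, hp _ _ hA]; exact hflip n A hAn
  · intro A hA
    rw [hp _ _ (hBm _ hA), hp _ _ (hBm _ hA), ← Measure.restrict_apply hA,
      ← Measure.restrict_apply hA]
    congr 1
    have : IsFiniteMeasure m := ⟨by rw [hm]; exact ENNReal.one_lt_top⟩
    refine ext_of_generate_finite {s | ∃ (x : ℕ → ZMod 2) (n : ℕ), s = PiNat.cylinder x n} ?_ ?_ ?_ ?_
    · rw [← (PiNat.isTopologicalBasis_cylinders (fun _ => ZMod 2)).borel_eq_generateFrom]
      exact BorelSpace.measurable_eq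
    · rintro _ ⟨x, n, rfl⟩ _ ⟨y, k, rfl⟩ ⟨z, hz1, hz2⟩
      rw [PiNat.mem_cylinder_iff_eq] at hz1 hz2
      rw [← hz1, ← hz2]
      rcases le_total n k with h | h
      · exact ⟨z, k, Set.inter_eq_right.2 (PiNat.cylinder_anti z h)⟩
      · exact ⟨z, n, Set.inter_eq_left.2 (PiNat.cylinder_anti z h)⟩
    · rintro _ ⟨x, n, rfl⟩
      have hc : MeasurableSet (PiNat.cylinder x n) :=
        (PiNat.isOpen_cylinder (fun _ => ZMod 2) x n).measurableSet
      rw [Measure.restrict_apply hc, Measure.restrict_apply hc]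
      refine hflip n _ fun y => ?_
      rw [PiNat.mem_cylinder_iff, PiNat.mem_cylinder_iff]
      refine forall₂_congr fun i hi => ?_
      rw [Pi.add_apply, Pi.single_eq_of_ne hi.ne, zero_add]
    · rw [Measure.restrict_apply MeasurableSet.univ, Measure.restrict_apply MeasurableSet.univ]
      exact hflip 0 _ (by simp)
  · rw [hp _ _ hVm, hp _ _ hVm]
    have e1 : V 1 ∩ V 0 = ∅ := by
      ext x; simp only [V, Set.mem_inter_iff, Set.mem_ofPred_eq, Set.mem_empty_iff_false,
            iff_false]; rintro ⟨h, h'⟩; rw [h] at h'; exact one_ne_zero h'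
    rw [e1, Set.inter_self, measure_empty]
    intro h
    have h2 := hflip 0 Set.univ (by simp)
    rw [Set.univ_inter, Set.univ_inter, ← h] at h2
    have : m Set.univ ≤ m (V 0) + m (V 1) := by
      refine (measure_mono ?_).trans (measure_union_le _ _)
      intro x _
      exact h01 (φ x)
    rw [hm, h2, ← h] at this
    simp at this

namespace ZhouEx
set_option linter.unusedSectionVars false

def XV : Type := ℕ → ZMod 2

noncomputable instance : MeasurableSpace XV := exists_gadget.choose

noncomputable def pX : ZMod 2 → Measure XV := exists_gadget.choose_spec.choose

noncomputable def VX : Set XV := exists_gadget.choose_spec.choose_spec.choose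

def BX (A : Set XV) : Prop := @MeasurableSet (ℕ → ZMod 2) MeasurableSpace.pi A

theorem gadget : MeasurableSpace.pi ≤ (inferInstance : MeasurableSpace XV) ∧
    MeasurableSpace.CountablyGenerated XV ∧
    (∀ b, pX b Set.univ ≤ 1) ∧
    (∀ (n : ℕ) (A : Set XV), MeasurableSet A →
      (∀ x : ℕ → ZMod 2, (Pi.single n 1 + x : ℕ → ZMod 2) ∈ A ↔ x ∈ A) → pX 0 A = pX 1 A) ∧
    (∀ A : Set XV, BX A → pX 0 A = pX 1 A) ∧
    MeasurableSet VX ∧ pX 0 VX ≠ pX 1 VX :=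
  exists_gadget.choose_spec.choose_spec.choose_spec

instance : MeasurableSpace.CountablyGenerated XV := gadget.2.1

theorem z01 : ∀ b : ZMod 2, b = 0 ∨ b = 1 := by decide

theorem BX_eval (n : ℕ) (T : Set (ZMod 2)) : BX {x : XV | x n ∈ T} := by
  have h : @Measurable (ℕ → ZMod 2) (ZMod 2) MeasurableSpace.pi _ (fun x => x n) :=
    measurable_pi_apply n
  exact h (MeasurableSet.of_discrete (s := T))

theorem meas_eval (n : ℕ) : Measurable (fun x : XV => x n) :=
  fun T _ => gadget.1 _ (BX_eval n T)

abbrev St (K : Type) : Type := K × (XV ⊕ ZMod 2)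

instance sumCG : MeasurableSpace.CountablyGenerated (XV ⊕ ZMod 2) := by
  let f : XV ⊕ ZMod 2 → XV × (Bool × ZMod 2) :=
    Sum.elim (fun x => (x, (true, 0))) (fun b => ((fun _ => 0 : ℕ → ZMod 2), (false, b)))
  have hf : Measurable f := by
    refine measurable_fun_sum ?_ (measurable_of_countable _)
    exact measurable_id.prodMk measurable_const
  have e : (Sum.instMeasurableSpace : MeasurableSpace (XV ⊕ ZMod 2)) =
      MeasurableSpace.comap f inferInstance := by
    refine le_antisymm ?_ hf.comap_le
    intro A hA
    refine ⟨(Sum.inl ⁻¹' A) ×ˢ {(true, 0)} ∪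
      Set.univ ×ˢ ((fun b => (false, b)) '' (Sum.inr ⁻¹' A)), ?_, ?_⟩
    · refine MeasurableSet.union ((measurable_inl hA).prod (measurableSet_singleton _))
        (MeasurableSet.univ.prod ?_)
      exact (Set.toFinite _).measurableSet
    · ext (x | b)
      · simp [f]
      · simp only [f, Set.mem_preimage, Sum.elim_inr, Set.mem_union, Set.mem_prod,
          Set.mem_singleton_iff, Prod.mk.injEq, Set.mem_image]
        constructor
        · rintro (⟨-, h, -⟩ | ⟨-, b', h, -, rfl⟩)
          · exact absurd h (by decide)
          · exact h
        · intro h; exact Or.inr ⟨Set.mem_univ _, b, h, trivial, rfl⟩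
  rw [e]
  exact MeasurableSpace.CountablyGenerated.comap f

instance : MeasurableSingletonClass XV := ⟨fun x => by
  have : ({x} : Set XV) = ⋂ n, {z : XV | z n ∈ ({x n} : Set (ZMod 2))} := by
    ext z
    simp only [Set.mem_singleton_iff, Set.mem_iInter, Set.mem_ofPred_eq]
    exact ⟨fun h n => by rw [h], fun h => funext h⟩
  rw [this]
  exact MeasurableSet.iInter fun n => gadget.1 _ (BX_eval n _)⟩

section
variable {K : Type} [MeasurableSpace K] [DiscreteMeasurableSpace K] [Countable K]

instance sumMS : MeasurableSingletonClass (XV ⊕ ZMod 2) := by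
  refine ⟨?_⟩
  rintro (x | b)
  · rw [← Set.image_singleton]; exact (measurableSet_singleton x).inl_image
  · rw [← Set.image_singleton]; exact (measurableSet_singleton b).inr_image

theorem sep_St : SeparableMeasurableSpace (St K) := by
  refine ⟨?_, ?_⟩
  · obtain ⟨b, h1, h2⟩ := (inferInstance : MeasurableSpace.CountablyGenerated (St K)).1
    exact ⟨b, h1, h2.symm⟩
  · intro s t hst
    exact ⟨{s}, measurableSet_singleton s, rfl, fun h => hst h.symm⟩

open Classical in
noncomputable def tau (r : K → Ordinal.{0}) (e : K → ℕ → K) :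
    (ℕ ⊕ (K × Bool)) → St K → Measure (St K)
  | Sum.inl n, (k, Sum.inl x) => Measure.dirac (e k n, Sum.inr (x n))
  | Sum.inl _, (k, Sum.inr b) =>
    if r k = 0 then (if b = 1 then Measure.dirac (k, Sum.inr 0) else 0)
    else (pX b).map (fun x => (k, Sum.inl x))
  | Sum.inr q, (k, w) => if k = q.1 ∧ w.isLeft = q.2 then Measure.dirac (k, Sum.inr 0) else 0

theorem meas_emb (k : K) : Measurable (fun x : XV => ((k, Sum.inl x) : St K)) :=
  measurable_const.prodMk measurable_inl

noncomputable def exLMP (r : K → Ordinal.{0}) (e : K → ℕ → K) : LMP (St K) (ℕ ⊕ (K × Bool)) where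
  τ := tau r e
  prob_le_one := by
    rintro (n | q) ⟨k, (x | b)⟩
    · simp [tau]
    · simp only [tau]
      split_ifs
      · simp
      · simp
      · rw [Measure.map_apply (meas_emb k) MeasurableSet.univ]
        exact gadget.2.2.1 b
    · simp only [tau]; split_ifs <;> simp
    · simp only [tau]; split_ifs <;> simp
  measurable_eval := by
    intro a E hE
    refine measurable_from_prod_countable_right fun k => measurable_fun_sum ?_
      (measurable_of_countable _)
    rcases a with n | q
    · exact (measurable_of_countable
        (fun b : ZMod 2 => (Measure.dirac ((e k n, Sum.inr b) : St K)) E)).comp (meas_eval n)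
    · exact measurable_const (a := tau r e (Sum.inr q)
        (k, Sum.inl (fun _ => 0 : ℕ → ZMod 2)) E)

def Q (r : K → Ordinal.{0}) (e : K → ℕ → K) (α : Ordinal.{0}) : Set (St K × St K) :=
  {p | (∃ k x y, p = ((k, Sum.inl x), (k, Sum.inl y)) ∧ ∀ n, r (e k n) ≤ α → x n = y n) ∨
    (∃ k b c, p = ((k, Sum.inr b), (k, Sum.inr c)) ∧ (r k ≤ α → b = c))}

variable (r : K → Ordinal.{0}) (e : K → ℕ → K)

theorem Q_anti {α γ : Ordinal.{0}} (h : α ≤ γ) : Q r e γ ⊆ Q r e α := by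
  rintro p (⟨k, x, y, hp, H⟩ | ⟨k, b, c, hp, H⟩)
  · exact Or.inl ⟨k, x, y, hp, fun n hn => H n (hn.trans h)⟩
  · exact Or.inr ⟨k, b, c, hp, fun hn => H (hn.trans h)⟩

theorem Q_symm {α : Ordinal.{0}} {s t : St K} (h : (s, t) ∈ Q r e α) : (t, s) ∈ Q r e α := by
  rcases h with (⟨k, x, y, hp, H⟩ | ⟨k, b, c, hp, H⟩)
  · simp only [Prod.mk.injEq] at hp
    exact Or.inl ⟨k, y, x, by rw [hp.1, hp.2], fun n hn => (H n hn).symm⟩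
  · simp only [Prod.mk.injEq] at hp
    exact Or.inr ⟨k, c, b, by rw [hp.1, hp.2], fun hn => (H hn).symm⟩

theorem closed_iff {α : Ordinal.{0}} {E : Set (St K)} (hE : LMP.RClosed (Q r e α) E)
    {s t : St K} (h : (s, t) ∈ Q r e α) : s ∈ E ↔ t ∈ E :=
  ⟨fun hs => hE hs h, fun ht => hE ht (Q_symm r e h)⟩

theorem step_X {α : Ordinal.{0}} {E : Set (St K)} (hm : MeasurableSet E)
    (hE : LMP.RClosed (Q r e α) E)
    (k : K) (x y : XV) (H : ∀ n, r (e k n) ≤ α → x n = y n) (a : ℕ ⊕ (K × Bool)) :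
    (exLMP r e).τ a (k, Sum.inl x) E = (exLMP r e).τ a (k, Sum.inl y) E := by
  rcases a with n | q
  · change (Measure.dirac ((e k n, Sum.inr (x n)) : St K)) E =
      (Measure.dirac ((e k n, Sum.inr (y n)) : St K)) E
    rw [Measure.dirac_apply' _ hm, Measure.dirac_apply' _ hm]
    have : ((e k n, Sum.inr (x n)) : St K) ∈ E ↔ ((e k n, Sum.inr (y n)) : St K) ∈ E :=
      closed_iff r e hE (Or.inr ⟨_, _, _, rfl, H n⟩)
    by_cases h : ((e k n, Sum.inr (x n)) : St K) ∈ E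
    · rw [Set.indicator_of_mem h, Set.indicator_of_mem (this.1 h)]; rfl
    · rw [Set.indicator_of_notMem h, Set.indicator_of_notMem (fun h' => h (this.2 h'))]
  · rfl

theorem step_pt {E : Set (St K)} (hm : MeasurableSet E) (k : K) (hk : r k ≠ 0)
    (hp : pX 0 {x | (k, Sum.inl x) ∈ E} = pX 1 {x | (k, Sum.inl x) ∈ E})
    (b c : ZMod 2) (a : ℕ ⊕ (K × Bool)) :
    (exLMP r e).τ a (k, Sum.inr b) E = (exLMP r e).τ a (k, Sum.inr c) E := by
  rcases a with n | q
  · simp only [exLMP, tau, if_neg hk]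
    rw [Measure.map_apply (meas_emb k) hm, Measure.map_apply (meas_emb k) hm]
    change pX b {x | (k, Sum.inl x) ∈ E} = pX c {x | (k, Sum.inl x) ∈ E}
    rcases z01 b with rfl | rfl <;> rcases z01 c with rfl | rfl <;> simp [hp]
  · rfl

theorem Q_zero_sub : Q r e 0 ⊆ (exLMP r e).eventBisim := by
  let Λ : Set (Set (St K)) := {E | MeasurableSet E ∧ LMP.RClosed (Q r e 0) E ∧
    ∀ k, BX {x | (k, Sum.inl x) ∈ E}}
  have hstep : ∀ E ∈ Λ, ∀ p ∈ Q r e 0, ∀ a, (exLMP r e).τ a p.1 E = (exLMP r e).τ a p.2 E := by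
    rintro E ⟨h1, h2, h3⟩ p (⟨k, x, y, rfl, H⟩ | ⟨k, b, c, rfl, H⟩) a
    · exact step_X r e h1 h2 k x y H a
    · by_cases hk : r k = 0
      · rw [H hk.le]
      · exact step_pt r e h1 k hk (gadget.2.2.2.2.1 _ (h3 k)) b c a
  intro p hp
  refine ⟨Λ, ⟨fun A h => h.1, ?_, ?_, ?_⟩, ?_, fun A hA => closed_iff r e hA.2.1 hp⟩
  · exact ⟨MeasurableSet.empty, fun x hx => hx.elim,
      fun k => @MeasurableSet.empty (ℕ → ZMod 2) MeasurableSpace.pi⟩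
  · rintro A ⟨h1, h2, h3⟩
    exact ⟨h1.compl, fun x hx s hs h => hx ((closed_iff r e h2 hs).2 h),
      fun k => @MeasurableSet.compl (ℕ → ZMod 2) _ MeasurableSpace.pi (h3 k)⟩
  · intro f hf
    refine ⟨MeasurableSet.iUnion fun n => (hf n).1, fun x hx s hs => ?_, fun k => ?_⟩
    · obtain ⟨n, hn⟩ := Set.mem_iUnion.1 hx
      exact Set.mem_iUnion.2 ⟨n, (hf n).2.1 hn hs⟩
    · have : {x : XV | ((k, Sum.inl x) : St K) ∈ ⋃ n, f n} =
          ⋃ n, {x : XV | ((k, Sum.inl x) : St K) ∈ f n} := by ext x; simp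
      rw [this]
      exact @MeasurableSet.iUnion (ℕ → ZMod 2) ℕ MeasurableSpace.pi _ _ (fun n => (hf n).2.2 k)
  · intro E hE q _ _ a
    refine ⟨measurableSet_lt measurable_const ((exLMP r e).measurable_eval a E hE.1), ?_, ?_⟩
    · intro x hx s hs
      have := hstep E hE _ hs a
      simp only [Set.mem_ofPred_eq] at *
      rwa [← this]
    · intro k
      rcases a with n | q'
      · exact BX_eval n {b : ZMod 2 | ENNReal.ofReal (q : ℝ) <
          (Measure.dirac ((e k n, Sum.inr b) : St K)) E}
      · exact @MeasurableSet.const (ℕ → ZMod 2) MeasurableSpace.pi (ENNReal.ofReal (q : ℝ) <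
          (tau r e (Sum.inr q') (k, Sum.inl (fun _ => 0 : ℕ → ZMod 2))) E)

theorem Q_sub (hsurj : ∀ k (α : Ordinal.{0}), α < r k → ∃ n, r (e k n) = α) (α : Ordinal.{0}) :
    Q r e α ⊆ (exLMP r e).Oiter (exLMP r e).eventBisim α := by
  induction α using Ordinal.limitRecOn with
  | zero => rw [LMP.Oiter_zero']; exact Q_zero_sub r e
  | add_one o ih =>
    rw [LMP.Oiter_add_one']
    intro p hp a E hE
    obtain ⟨h1, h2⟩ := LMP.sigmaCl_anti ih hE
    have ho : o < o + 1 := lt_add_one o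
    rcases hp with (⟨k, x, y, rfl, H⟩ | ⟨k, b, c, rfl, H⟩)
    · exact step_X r e h1 h2 k x y (fun n hn => H n (hn.trans ho.le)) a
    · by_cases hk : r k ≤ o + 1
      · rw [H hk]
      · push Not at hk
        obtain ⟨n, hn⟩ := hsurj k _ hk
        refine step_pt r e h1 k (fun h => by rw [h] at hk; exact not_lt_zero hk) ?_ b c a
        refine gadget.2.2.2.1 n _ (meas_emb k h1) fun x => ?_
        refine closed_iff r e h2 (Or.inl ⟨_, _, _, rfl, fun i hi => ?_⟩)
        have : i ≠ n := by
          rintro rfl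
          rw [hn] at hi
          exact absurd hi (not_le.2 ho)
        change (Pi.single n 1 + x : ℕ → ZMod 2) i = x i
        rw [Pi.add_apply, Pi.single_eq_of_ne this, zero_add]
  | limit o ho ih =>
    rw [LMP.Oiter_limit' _ _ o ho]
    exact Set.subset_iInter₂ fun o' ho' => (Q_anti r e ho'.le).trans (ih o' ho')

theorem bisim_comp {k k' : K} {w w' : XV ⊕ ZMod 2}
    (h : ((k, w), (k', w')) ∈ (exLMP r e).stateBisim) : k' = k ∧ w'.isLeft = w.isLeft := by
  have := (exLMP r e).stateBisim_isStateBisim.2 _ h (Sum.inr (k, w.isLeft)) Set.univ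
    ⟨MeasurableSet.univ, fun _ _ _ _ => trivial⟩
  by_contra hc
  have h1 : (exLMP r e).τ (Sum.inr (k, w.isLeft)) (k, w) = Measure.dirac (k, Sum.inr 0) :=
    if_pos ⟨rfl, rfl⟩
  have h2 : (exLMP r e).τ (Sum.inr (k, w.isLeft)) (k', w') = 0 := if_neg hc
  simp only [h1, h2] at this
  simp at this

theorem not_bisim (hlt : ∀ k n, r k ≠ 0 → r (e k n) < r k) (α : Ordinal.{0}) :
    ∀ k, r k = α → ∀ b c, ((k, Sum.inr b), (k, Sum.inr c)) ∈ (exLMP r e).stateBisim → b = c := by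
  induction α using WellFoundedLT.induction with
  | ind α ih =>
  have hB := (exLMP r e).stateBisim_isStateBisim
  intro k hk b c hbc
  by_contra hne
  by_cases h0 : r k = 0
  · have := hB.2 _ hbc (Sum.inl 0) Set.univ ⟨MeasurableSet.univ, fun _ _ _ _ => trivial⟩
    simp only [exLMP, tau, if_pos h0] at this
    rcases z01 b with rfl | rfl <;> rcases z01 c with rfl | rfl <;> simp at this hne
  · let A : Set (St K) := {s | ∃ x ∈ VX, s = (k, Sum.inl x)}
    have hAV : {x | ((k, Sum.inl x) : St K) ∈ A} = VX := by
      ext x; simp [A]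
    have hAm : MeasurableSet A := by
      have : A = {k} ×ˢ (Sum.inl '' VX) := by
        ext ⟨k', w⟩
        simp only [A, Set.mem_ofPred_eq, Prod.mk.injEq, Set.mem_prod, Set.mem_singleton_iff,
          Set.mem_image]
        constructor
        · rintro ⟨x, h, h1, h2⟩; exact ⟨h1, x, h, h2.symm⟩
        · rintro ⟨h1, x, h, h2⟩; exact ⟨x, h, h1, h2.symm⟩
      rw [this]
      exact (measurableSet_singleton k).prod gadget.2.2.2.2.2.1.inl_image
    have hAc : LMP.RClosed (exLMP r e).stateBisim A := by
      rintro _ ⟨x, hx, rfl⟩ ⟨k', w⟩ hs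
      obtain ⟨rfl, hw⟩ := bisim_comp r e hs
      rcases w with y | b
      swap
      · simp at hw
      refine ⟨y, ?_, rfl⟩
      have : x = y := by
        refine funext fun n => ?_
        by_contra hxy
        have hC : LMP.RClosed (exLMP r e).stateBisim {((e k' n, Sum.inr (x n)) : St K)} := by
          rintro _ rfl ⟨k'', w⟩ hs'
          obtain ⟨rfl, hw'⟩ := bisim_comp r e hs'
          rcases w with z | b'
          · simp at hw'
          rw [ih _ (hk ▸ hlt k' n h0) _ rfl _ _ hs']
          rfl
        have := hB.2 _ hs (Sum.inl n) _ ⟨measurableSet_singleton _, hC⟩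
        simp only [exLMP, tau] at this
        rw [Measure.dirac_apply' _ (measurableSet_singleton _),
          Measure.dirac_apply' _ (measurableSet_singleton _)] at this
        rw [Set.indicator_of_mem (Set.mem_singleton _), Set.indicator_of_notMem] at this
        · simp at this
        · intro h
          simp only [Set.mem_singleton_iff, Prod.mk.injEq, Sum.inr.injEq, true_and] at h
          exact hxy h.symm
      rwa [← this]
    have := hB.2 _ hbc (Sum.inl 0) A ⟨hAm, hAc⟩
    simp only [exLMP, tau, if_neg h0] at this
    rw [Measure.map_apply (meas_emb k) hAm, Measure.map_apply (meas_emb k) hAm] at this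
    change pX b {x | ((k, Sum.inl x) : St K) ∈ A} = pX c {x | ((k, Sum.inl x) : St K) ∈ A} at this
    rw [hAV] at this
    have hV := gadget.2.2.2.2.2.2
    rcases z01 b with rfl | rfl <;> rcases z01 c with rfl | rfl
    · exact hne rfl
    · exact hV this
    · exact hV this.symm
    · exact hne rfl

end

theorem exists_index (β : Ordinal.{0}) (hβ : β.card ≤ Cardinal.aleph0) :
    ∃ (K : Type) (_ : Countable K) (r : K → Ordinal.{0}) (e : K → ℕ → K),
      (∀ k (α : Ordinal.{0}), α < r k → ∃ n, r (e k n) = α) ∧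
      (∀ k n, r k ≠ 0 → r (e k n) < r k) ∧ ∃ k, r k = β := by
  have hc : Countable (β + 1).ToType := by
    rw [← Cardinal.mk_le_aleph0_iff, Cardinal.mk_toType, Ordinal.card_add, Ordinal.card_one]
    exact Cardinal.add_le_aleph0.2 ⟨hβ, Cardinal.one_le_aleph0⟩
  let r : (β + 1).ToType → Ordinal.{0} := fun k => (Ordinal.ToType.mk.symm k).1
  have hr : ∀ α < β + 1, ∃ k, r k = α := fun α h => ⟨Ordinal.ToType.mk ⟨α, h⟩, by simp [r]⟩
  have hr' : ∀ k, r k < β + 1 := fun k => (Ordinal.ToType.mk.symm k).2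
  have : ∀ k, ∃ f : ℕ → (β + 1).ToType, (∀ α < r k, ∃ n, r (f n) = α) ∧
      (∀ n, r k ≠ 0 → r (f n) < r k) := by
    intro k
    by_cases h0 : r k = 0
    · exact ⟨fun _ => k, fun α h => absurd (h0 ▸ h) not_lt_zero, fun _ h => absurd h0 h⟩
    · obtain ⟨k0, hk0⟩ := hr 0 (by simp)
      have : Nonempty {k' // r k' < r k} := ⟨⟨k0, by rw [hk0]; exact pos_iff_ne_zero.2 h0⟩⟩
      obtain ⟨f, hf⟩ := exists_surjective_nat {k' // r k' < r k}
      refine ⟨fun n => (f n).1, fun α h => ?_, fun n _ => (f n).2⟩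
      obtain ⟨k', rfl⟩ := hr α (h.trans (hr' k))
      obtain ⟨n, hn⟩ := hf ⟨k', h⟩
      exact ⟨n, by simp only [hn]⟩
  choose e h1 h2 using this
  exact ⟨_, hc, r, e, h1, h2, hr β (lt_add_one β)⟩

theorem main (β : Ordinal.{0}) (hβ : β.card ≤ Cardinal.aleph0) :
    ∃ P : PackedLMP, P.Separable ∧ ∃ ζ : Ordinal.{0}, P.IsZhou ζ ∧ β ≤ ζ := by
  obtain ⟨K, cK, r, e, h1, h2, k, hk⟩ := exists_index β hβ
  let _ : MeasurableSpace K := ⊤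
  have : DiscreteMeasurableSpace K := ⟨fun _ => trivial⟩
  refine ⟨⟨St K, inferInstance, ℕ ⊕ (K × Bool), inferInstance, exLMP r e⟩, sep_St, ?_⟩
  obtain ⟨ζ, hζ⟩ := (exLMP r e).exists_isZhou
  refine ⟨ζ, hζ, ?_⟩
  by_contra hlt
  push Not at hlt
  have hmem : (((k, Sum.inr 0), (k, Sum.inr 1)) : St K × St K) ∈ Q r e ζ :=
    Or.inr ⟨k, 0, 1, rfl, fun h => absurd (hk ▸ h) (not_le.2 hlt)⟩
  have := Q_sub r e h1 ζ hmem
  rw [hζ.1] at this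
  exact zero_ne_one (not_bisim r e h2 _ k rfl 0 1 this)

end ZhouEx

/-- For every countable ordinal `β` there is a separable LMP whose Zhou ordinal is at least
`β`; that is, the supremum of the Zhou ordinals of separable LMPs is at least `ω₁`. -/
theorem exists_sepLMP_zhou_ge_of_countable
    (β : Ordinal.{0}) (hβ : β.card ≤ Cardinal.aleph0) :
    (∃ P : PackedLMP, P.Separable ∧ ∃ ζ : Ordinal.{0}, P.IsZhou ζ ∧ β ≤ ζ) ∧
    (Cardinal.aleph 1).ord ≤ sSup zhouOrdinals := by
  refine ⟨ZhouEx.main β hβ, ?_⟩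
  by_contra hlt
  push Not at hlt
  have hc : (sSup zhouOrdinals).card ≤ Cardinal.aleph0 := by
    have := Cardinal.lt_ord.1 hlt
    rwa [← Cardinal.succ_aleph0, Order.lt_succ_iff] at this
  have hc' : (sSup zhouOrdinals + 1).card ≤ Cardinal.aleph0 := by
    rw [Ordinal.card_add, Ordinal.card_one]
    exact Cardinal.add_le_aleph0.2 ⟨hc, Cardinal.one_le_aleph0⟩
  obtain ⟨P, hP, ζ, hζ, hle⟩ := ZhouEx.main _ hc'
  have := le_csSup zhouOrdinals_bdd (show ζ ∈ zhouOrdinals from ⟨P, hP, hζ⟩)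
  exact absurd (hle.trans this) (not_le.2 (lt_add_one _))
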